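/- A point s ∈ (0,∞) is regular for the branching process (Z_n) in the fixed environment (f_i) (i.e. P(W(s) ∈ {0,∞}) = 1) if and only if lim_{n→∞} h_n(t)/h_n(s) = 0 for all 0 < t < s, or equivalently if and only if lim_{n→∞} h_n(t)/h_n(s) = ∞ for all s < t < ∞. -/

import Mathlib

open MeasureTheory Filter Topology Set
open scoped ENNReal

noncomputable section

/-- `f` is the probability generating function `f(x) = ∑_{j≥1} p_j x^j` of a probability
distribution on the positive integers with `p 1 ≠ 1`. -/
def IsPGF (f : ℝ → ℝ) : Prop :=
  ∃ p : ℕ → ℝ, (∀ j, 0 ≤ p j) ∧ p 0 = 0 ∧ p 1 ≠ 1 ∧ HasSum p 1 ∧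
    ∀ x ∈ Set.Icc (0 : ℝ) 1, HasSum (fun j => p j * x ^ j) (f x)

/-- `g` is the inverse of `f` on `[0,1]`. -/
def IsInvOn01 (g f : ℝ → ℝ) : Prop :=
  ∀ x ∈ Set.Icc (0 : ℝ) 1, g (f x) = x ∧ f (g x) = x ∧ g x ∈ Set.Icc (0 : ℝ) 1

/-- `h(s) = -log f⁻¹(e^{-s})`, expressed through the inverse `g = f⁻¹`. -/
def hfun (g : ℝ → ℝ) (s : ℝ) : ℝ := - Real.log (g (Real.exp (-s)))

/-- `h_n(s) = h_{n-1}(⋯(h_0(s))⋯)`, built from the sequence `g i = f_i⁻¹` of inverses. -/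
def hIter (g : ℕ → ℝ → ℝ) : ℕ → ℝ → ℝ
  | 0, s => s
  | n + 1, s => hfun (g (n : ℕ)) (hIter g n s)

/-- `(Z n)` is a branching process in the fixed environment given by the pgfs `f n`:
`Z 0 = 1`, each `Z n` is a positive-integer valued `F n`-measurable variable, and
`E[t ^ Z (n+1) | F n] = (f n t) ^ Z n` a.s. for every `t ∈ [0,1]`. -/
def IsBranchingProcess {Ω : Type*} {mΩ : MeasurableSpace Ω} (μ : Measure Ω)
    (F : Filtration ℕ mΩ) (f : ℕ → ℝ → ℝ) (Z : ℕ → Ω → ℕ) : Prop :=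
  (∀ ω, Z 0 ω = 1) ∧ (∀ n ω, 1 ≤ Z n ω) ∧ (∀ n, Measurable[F n] (Z n)) ∧
    ∀ n, ∀ t ∈ Set.Icc (0 : ℝ) 1,
      (μ[fun ω => t ^ Z (n + 1) ω | F n]) =ᵐ[μ] fun ω => f n t ^ Z n ω

/-- `exp(-w)` for `w ∈ [0,∞]`, with the convention `exp(-∞) = 0`. -/
def expNeg (w : ℝ≥0∞) : ℝ := if w = ∞ then 0 else Real.exp (-w.toReal)

/-- `s ∈ (0,∞)` is a regular point (analytic definition):
`h_n(t)/h_n(s) → 0` for every `0 < t < s`. -/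
def AnalyticRegular (g : ℕ → ℝ → ℝ) (s : ℝ) : Prop :=
  ∀ t, 0 < t → t < s → Tendsto (fun n => hIter g n t / hIter g n s) atTop (𝓝 0)

/-- `U` is slowly varying at infinity. -/
def SlowlyVarying (U : ℝ → ℝ) : Prop :=
  ∀ lam : ℝ, 0 < lam → Tendsto (fun x => U (lam * x) / U x) atTop (𝓝 1)

/-- Generalized inverse `V(x) = inf{y ≥ 0 : U(y) ≥ x}`. -/
def Vfun (U : ℝ → ℝ) (x : ℝ) : ℝ := sInf {y : ℝ | 0 ≤ y ∧ x ≤ U y}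

/-- Generalized inverse `G(x) = inf{y ≥ 0 : F(y) ≥ x}` of a distribution function. -/
def Gfun (F : ℝ → ℝ) (x : ℝ) : ℝ := sInf {y : ℝ | 0 ≤ y ∧ x ≤ F y}

/-- `Q(x) = f'(x)(1-x)/(1-f(x))`. -/
def Qfun (f : ℝ → ℝ) (x : ℝ) : ℝ := deriv f x * (1 - x) / (1 - f x)

/-- Iterated inverse `f_n^{(-1)} = f_{n-1}^{(-1)} ∘ ⋯ ∘ f_0^{(-1)}`, the inverse of the
composition `f_n = f_0 ∘ f_1 ∘ ⋯ ∘ f_{n-1}`, built from the inverses `g i = f_i⁻¹`. -/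
def fCompInv (g : ℕ → ℝ → ℝ) : ℕ → ℝ → ℝ
  | 0, t => t
  | n + 1, t => g n (fCompInv g n t)

/-!
Since `f_n(exp(-h_{n+1}(t))) = exp(-h_n(t))`, the expectation of `exp(-h_n(t) Z_n)` does not depend
on `n`, and dominated convergence gives `E[exp(-W(t))] = exp(-t)`. Thus `W` is nondecreasing in `t`,
but `W(t)` and `W(u)` are not a.s. equal for `t ≠ u`.

For `t < u`, the ratio `h_n(t)/h_n(u)` tends to `0` iff a.s. one of `W(t)`, `W(u)` is `0` or `∞`.
If it does, then `W(t) = 0` or `W(u) = ∞`. If it does not, then `W(t) ≤ W(u) ≤ C W(t)` for some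
finite `C`, so `W(t) = W(u)` wherever one of them is `0` or `∞`, hence not almost everywhere.

Finally, writing `x = exp(-W(s))` and `y = exp(-W(t))`, if one of `x`, `y` is `0` or `1` then
`x (1 - x) ≤ |y - x|`. As `W(s)` and `W(t)` are comparable, the right-hand side has expectation
`|exp(-t) - exp(-s)|`, so if this happens a.s. for `t` arbitrarily close to `s`, on either side,
then `x (1 - x) = 0` a.s.
-/

namespace IsPGF

variable {f : ℝ → ℝ}

lemma monotoneOn (hf : IsPGF f) : MonotoneOn f (Icc 0 1) := by
  obtain ⟨p, hp, -, -, -, hsum⟩ := hf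
  intro x hx y hy hxy
  exact hasSum_le (fun j => mul_le_mul_of_nonneg_left (pow_le_pow_left₀ hx.1 hxy j) (hp j))
    (hsum x hx) (hsum y hy)

lemma map_zero (hf : IsPGF f) : f 0 = 0 := by
  obtain ⟨p, -, hp0, -, -, hsum⟩ := hf
  refine (hsum 0 (by simp)).unique ?_
  convert hasSum_zero with j
  rcases j with _ | j <;> simp [hp0]

lemma map_one (hf : IsPGF f) : f 1 = 1 := by
  obtain ⟨p, -, -, -, hp, hsum⟩ := hf
  exact (hsum 1 (by simp)).unique (by simpa using hp)

end IsPGF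

lemma exp_neg_mem_Ioo {s : ℝ} (hs : 0 < s) : Real.exp (-s) ∈ Ioo 0 1 :=
  ⟨Real.exp_pos _, Real.exp_lt_one_iff.2 (neg_neg_of_pos hs)⟩

lemma exp_neg_mem_Icc {s : ℝ} (hs : 0 < s) : Real.exp (-s) ∈ Icc 0 1 :=
  Ioo_subset_Icc_self (exp_neg_mem_Ioo hs)

namespace IsInvOn01

variable {f g : ℝ → ℝ}

lemma strictMonoOn (hg : IsInvOn01 g f) (hf : IsPGF f) : StrictMonoOn g (Icc 0 1) := by
  intro x hx y hy hxy
  by_contra! hle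
  have hyx := hf.monotoneOn (hg y hy).2.2 (hg x hx).2.2 hle
  rw [(hg x hx).2.1, (hg y hy).2.1] at hyx
  exact hxy.not_ge hyx

lemma mapsTo_Ioo (hg : IsInvOn01 g f) (hf : IsPGF f) : MapsTo g (Ioo 0 1) (Ioo 0 1) := by
  have map_zero : g 0 = 0 := by simpa [hf.map_zero] using (hg 0 (by simp)).1
  have map_one : g 1 = 1 := by simpa [hf.map_one] using (hg 1 (by simp)).1
  intro x hx
  have hx' := Ioo_subset_Icc_self hx
  refine ⟨?_, ?_⟩
  · simpa [map_zero] using hg.strictMonoOn hf (by simp) hx' hx.1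
  · simpa [map_one] using hg.strictMonoOn hf hx' (by simp) hx.2

lemma exp_neg_hfun (hg : IsInvOn01 g f) (hf : IsPGF f) {s : ℝ} (hs : 0 < s) :
    Real.exp (-hfun g s) = g (Real.exp (-s)) := by
  rw [hfun, neg_neg, Real.exp_log (hg.mapsTo_Ioo hf (exp_neg_mem_Ioo hs)).1]

lemma hfun_pos (hg : IsInvOn01 g f) (hf : IsPGF f) {s : ℝ} (hs : 0 < s) : 0 < hfun g s := by
  obtain ⟨hpos, hlt⟩ := hg.mapsTo_Ioo hf (exp_neg_mem_Ioo hs)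
  exact neg_pos.2 (Real.log_neg hpos hlt)

lemma strictMonoOn_hfun (hg : IsInvOn01 g f) (hf : IsPGF f) :
    StrictMonoOn (hfun g) (Ioi 0) := by
  intro s hs t ht hst
  refine neg_lt_neg (Real.log_lt_log (hg.mapsTo_Ioo hf (exp_neg_mem_Ioo ht)).1 ?_)
  exact hg.strictMonoOn hf (exp_neg_mem_Icc ht) (exp_neg_mem_Icc hs)
    (Real.exp_lt_exp.2 (neg_lt_neg hst))

end IsInvOn01

section hIter

variable {f g : ℕ → ℝ → ℝ}

lemma hIter_pos (hf : ∀ i, IsPGF (f i)) (hg : ∀ i, IsInvOn01 (g i) (f i)) {s : ℝ} (hs : 0 < s)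
    (n : ℕ) : 0 < hIter g n s := by
  induction n with
  | zero => exact hs
  | succ n ih => exact (hg n).hfun_pos (hf n) ih

lemma strictMonoOn_hIter (hf : ∀ i, IsPGF (f i)) (hg : ∀ i, IsInvOn01 (g i) (f i)) (n : ℕ) :
    StrictMonoOn (hIter g n) (Ioi 0) := by
  induction n with
  | zero => exact strictMono_id.strictMonoOn _
  | succ n ih =>
    exact ((hg n).strictMonoOn_hfun (hf n)).comp ih fun _ hs => hIter_pos hf hg hs n

lemma pgf_exp_neg_hIter_succ (hf : ∀ i, IsPGF (f i)) (hg : ∀ i, IsInvOn01 (g i) (f i))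
    {s : ℝ} (hs : 0 < s) (n : ℕ) :
    f n (Real.exp (-hIter g (n + 1) s)) = Real.exp (-hIter g n s) := by
  have hpos := hIter_pos hf hg hs n
  rw [hIter, (hg n).exp_neg_hfun (hf n) hpos, (hg n _ (exp_neg_mem_Icc hpos)).2.1]

end hIter

/-- `w ∈ [0,∞]` is one of the endpoints `0`, `∞`, equivalently `exp(-w) ∈ {0, 1}`. A point `s` is
regular when `W(s)` is an endpoint almost surely. -/
def IsEndpoint (w : ℝ≥0∞) : Prop := w = 0 ∨ w = ∞

section expNeg

lemma expNeg_eq_toReal_exp (w : ℝ≥0∞) : expNeg w = (EReal.exp (-w)).toReal := by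
  induction w with
  | top => simp [expNeg]
  | coe x =>
    rw [expNeg, if_neg ENNReal.coe_ne_top, ENNReal.coe_toReal, EReal.coe_nnreal_eq_coe_real,
      ← EReal.coe_neg, EReal.exp_coe, ENNReal.toReal_ofReal (Real.exp_nonneg _)]

lemma expNeg_ofReal {x : ℝ} (hx : 0 ≤ x) : expNeg (ENNReal.ofReal x) = Real.exp (-x) := by
  rw [expNeg, if_neg ENNReal.ofReal_ne_top, ENNReal.toReal_ofReal hx]

lemma exp_neg_coe_ne_top (w : ℝ≥0∞) : EReal.exp (-w) ≠ ∞ := by simp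

lemma continuous_expNeg : Continuous expNeg := by
  rw [funext expNeg_eq_toReal_exp]
  exact ENNReal.continuousOn_toReal.comp_continuous
    (ENNReal.continuous_exp.comp continuous_coe_ennreal_ereal.neg) exp_neg_coe_ne_top

lemma antitone_expNeg : Antitone expNeg := by
  intro v w hvw
  rw [expNeg_eq_toReal_exp, expNeg_eq_toReal_exp]
  exact ENNReal.toReal_mono (exp_neg_coe_ne_top v)
    (EReal.exp_monotone (EReal.neg_le_neg_iff.2 (EReal.coe_ennreal_le_coe_ennreal_iff.2 hvw)))

lemma expNeg_mem_Icc (w : ℝ≥0∞) : expNeg w ∈ Icc 0 1 :=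
  ⟨by simpa [expNeg] using antitone_expNeg (le_top : w ≤ ∞),
    by simpa [expNeg] using antitone_expNeg (zero_le : 0 ≤ w)⟩

lemma isEndpoint_iff_expNeg {w : ℝ≥0∞} : IsEndpoint w ↔ expNeg w = 0 ∨ expNeg w = 1 := by
  by_cases hw : w = ∞
  · simp [IsEndpoint, expNeg, hw]
  · simp [IsEndpoint, expNeg, hw, ENNReal.toReal_eq_zero_iff]

lemma expNeg_mul_one_sub_le_abs_sub {v w : ℝ≥0∞} (h : IsEndpoint v ∨ IsEndpoint w) :
    expNeg v * (1 - expNeg v) ≤ |expNeg w - expNeg v| := by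
  obtain ⟨hv0, hv1⟩ := expNeg_mem_Icc v
  rw [isEndpoint_iff_expNeg, isEndpoint_iff_expNeg] at h
  rcases h with (hv | hv) | (hw | hw)
  · simp [hv]
  · simp [hv]
  · rw [hw, zero_sub, abs_neg, abs_of_nonneg hv0]
    nlinarith
  · rw [hw, abs_of_nonneg (sub_nonneg.2 hv1)]
    nlinarith

end expNeg

section Integral

variable {Ω : Type*} {mΩ : MeasurableSpace Ω} {μ : Measure Ω}

lemma integral_abs_sub_eq_abs_sub_integral {φ ψ : Ω → ℝ} (hφ : Integrable φ μ)
    (hψ : Integrable ψ μ) (h : φ ≤ᵐ[μ] ψ ∨ ψ ≤ᵐ[μ] φ) :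
    ∫ ω, |φ ω - ψ ω| ∂μ = |∫ ω, φ ω ∂μ - ∫ ω, ψ ω ∂μ| := by
  wlog hψφ : ψ ≤ᵐ[μ] φ generalizing φ ψ
  · simp only [abs_sub_comm (φ _), abs_sub_comm (∫ ω, φ ω ∂μ)]
    exact this hψ hφ h.symm (h.resolve_right hψφ)
  rw [abs_of_nonneg (sub_nonneg.2 (integral_mono_ae hψ hφ hψφ)), ← integral_sub hφ hψ]
  exact integral_congr_ae (hψφ.mono fun ω hω => abs_of_nonneg (sub_nonneg.2 hω))

variable [IsFiniteMeasure μ]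

lemma integrable_expNeg {V : Ω → ℝ≥0∞} (hV : AEMeasurable V μ) :
    Integrable (fun ω => expNeg (V ω)) μ :=
  .of_mem_Icc 0 1 (continuous_expNeg.measurable.comp_aemeasurable hV)
    (ae_of_all _ fun _ => expNeg_mem_Icc _)

lemma integrable_expNeg_mul_one_sub {V : Ω → ℝ≥0∞} (hV : AEMeasurable V μ) :
    Integrable (fun ω => expNeg (V ω) * (1 - expNeg (V ω))) μ := by
  have hmeas : AEMeasurable (fun ω => expNeg (V ω)) μ :=
    continuous_expNeg.measurable.comp_aemeasurable hV
  refine .of_mem_Icc 0 1 (hmeas.mul (hmeas.const_sub 1)) (ae_of_all _ fun ω => ?_)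
  exact unitInterval.mul_mem (expNeg_mem_Icc _) (Icc.mem_iff_one_sub_mem.1 (expNeg_mem_Icc _))

lemma integral_expNeg_mul_one_sub_le {V W : Ω → ℝ≥0∞} (hV : AEMeasurable V μ)
    (hW : AEMeasurable W μ) (hcomp : V ≤ᵐ[μ] W ∨ W ≤ᵐ[μ] V)
    (hend : ∀ᵐ ω ∂μ, IsEndpoint (V ω) ∨ IsEndpoint (W ω)) :
    ∫ ω, expNeg (V ω) * (1 - expNeg (V ω)) ∂μ ≤
      |∫ ω, expNeg (W ω) ∂μ - ∫ ω, expNeg (V ω) ∂μ| := by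
  have hV' := integrable_expNeg hV
  have hW' := integrable_expNeg hW
  rw [← integral_abs_sub_eq_abs_sub_integral hW' hV'
    (hcomp.imp (·.mono fun _ h => antitone_expNeg h) (·.mono fun _ h => antitone_expNeg h))]
  exact integral_mono_ae (integrable_expNeg_mul_one_sub hV) (hW'.sub hV').abs
    (hend.mono fun _ => expNeg_mul_one_sub_le_abs_sub)

lemma ae_isEndpoint_of_integral_nonpos {V : Ω → ℝ≥0∞} (hV : AEMeasurable V μ)
    (h : ∫ ω, expNeg (V ω) * (1 - expNeg (V ω)) ∂μ ≤ 0) : ∀ᵐ ω ∂μ, IsEndpoint (V ω) := by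
  have hnonneg : 0 ≤ fun ω => expNeg (V ω) * (1 - expNeg (V ω)) := fun ω =>
    mul_nonneg (expNeg_mem_Icc _).1 (sub_nonneg.2 (expNeg_mem_Icc _).2)
  have hzero := (integral_eq_zero_iff_of_nonneg hnonneg (integrable_expNeg_mul_one_sub hV)).1
    (h.antisymm (integral_nonneg hnonneg))
  filter_upwards [hzero] with ω hω
  rcases mul_eq_zero.1 hω with h0 | h1
  · exact isEndpoint_iff_expNeg.2 (.inl h0)
  · exact isEndpoint_iff_expNeg.2 (.inr (sub_eq_zero.1 h1).symm)

lemma ae_isEndpoint_of_tendsto_integral {ι : Type*} {l : Filter ι} [l.NeBot] {V : Ω → ℝ≥0∞}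
    {W : ι → Ω → ℝ≥0∞} (hV : AEMeasurable V μ) (hW : ∀ᶠ i in l, AEMeasurable (W i) μ)
    (hcomp : ∀ᶠ i in l, V ≤ᵐ[μ] W i ∨ W i ≤ᵐ[μ] V)
    (hend : ∀ᶠ i in l, ∀ᵐ ω ∂μ, IsEndpoint (V ω) ∨ IsEndpoint (W i ω))
    (hlim : Tendsto (fun i => ∫ ω, expNeg (W i ω) ∂μ) l (𝓝 (∫ ω, expNeg (V ω) ∂μ))) :
    ∀ᵐ ω ∂μ, IsEndpoint (V ω) := by
  have habs : Tendsto (fun i => |∫ ω, expNeg (W i ω) ∂μ - ∫ ω, expNeg (V ω) ∂μ|) l (𝓝 0) := by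
    simpa using (hlim.sub_const (∫ ω, expNeg (V ω) ∂μ)).abs
  refine ae_isEndpoint_of_integral_nonpos hV (ge_of_tendsto habs ?_)
  filter_upwards [hW, hcomp, hend] with i using integral_expNeg_mul_one_sub_le hV

end Integral

section Limits

variable {ι : Type*} {l : Filter ι} {a b z : ι → ℝ} {A B : ℝ≥0∞}

lemma tendsto_div_atTop_iff_tendsto_div_zero (ha : ∀ i, 0 < a i) (hb : ∀ i, 0 < b i) :
    Tendsto (fun i => a i / b i) l atTop ↔ Tendsto (fun i => b i / a i) l (𝓝 0) := by
  have hinv : (fun i => a i / b i) = (fun i => b i / a i)⁻¹ := by ext; simp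
  have hpos : ∀ᶠ i in l, b i / a i ∈ Ioi 0 := .of_forall fun i => div_pos (hb i) (ha i)
  refine ⟨fun h => ?_, fun h => ?_⟩
  · simpa only [hinv, inv_inv] using h.inv_tendsto_atTop
  · rw [hinv]
    exact (tendsto_nhdsWithin_iff.2 ⟨h, hpos⟩).inv_tendsto_nhdsGT_zero

lemma le_ofReal_mul_of_frequently_le {C : ℝ} (hz : ∀ i, 0 ≤ z i) (hC : 0 ≤ C)
    (hab : ∃ᶠ i in l, a i ≤ C * b i)
    (hA : Tendsto (fun i => ENNReal.ofReal (z i * a i)) l (𝓝 A))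
    (hB : Tendsto (fun i => ENNReal.ofReal (z i * b i)) l (𝓝 B)) :
    A ≤ ENNReal.ofReal C * B := by
  have hCB := ENNReal.Tendsto.const_mul hB (.inr (ENNReal.ofReal_ne_top (r := C)))
  refine le_of_tendsto_of_tendsto_of_frequently hA hCB (hab.mono fun i hi => ?_)
  rw [← ENNReal.ofReal_mul hC, mul_left_comm]
  exact ENNReal.ofReal_le_ofReal (mul_le_mul_of_nonneg_left hi (hz i))

lemma eq_zero_or_eq_top_of_tendsto_div_zero [l.NeBot] (ha : ∀ i, 0 ≤ a i) (hb : ∀ i, 0 < b i)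
    (hab : Tendsto (fun i => a i / b i) l (𝓝 0))
    (hA : Tendsto (fun i => ENNReal.ofReal (z i * a i)) l (𝓝 A))
    (hB : Tendsto (fun i => ENNReal.ofReal (z i * b i)) l (𝓝 B)) : A = 0 ∨ B = ∞ := by
  refine or_iff_not_imp_right.2 fun hBtop => ?_
  have hmul := ENNReal.Tendsto.mul (ENNReal.tendsto_ofReal hab) (.inr hBtop) hB (.inr (by simp))
  rw [ENNReal.ofReal_zero, zero_mul] at hmul
  refine tendsto_nhds_unique hA (hmul.congr fun i => ?_)
  rw [← ENNReal.ofReal_mul (div_nonneg (ha i) (hb i).le), mul_left_comm,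
    div_mul_cancel₀ _ (hb i).ne']

lemma eq_of_le_of_le_mul_of_isEndpoint {C : ℝ≥0∞} (hC : C ≠ ∞) (hAB : A ≤ B) (hBA : B ≤ C * A)
    (hend : IsEndpoint A ∨ IsEndpoint B) : A = B := by
  rcases hend with (rfl | rfl) | (rfl | rfl)
  · simpa [eq_comm] using hBA
  · exact (top_le_iff.1 hAB).symm
  · exact nonpos_iff_eq_zero.1 hAB
  · by_contra hA
    exact ENNReal.mul_ne_top hC hA (top_le_iff.1 hBA)

end Limits

/-- `V` is almost surely the limit `W(s)` of `Z_n h_n(s)` in `[0,∞]`. Truncation by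
`ENNReal.ofReal` is harmless because `h_n(s) > 0`. -/
def IsScaledLimit {Ω : Type*} [MeasurableSpace Ω] (μ : Measure Ω) (g : ℕ → ℝ → ℝ)
    (Z : ℕ → Ω → ℕ) (s : ℝ) (V : Ω → ℝ≥0∞) : Prop :=
  ∀ᵐ ω ∂μ, Tendsto (fun n => ENNReal.ofReal ((Z n ω : ℝ) * hIter g n s)) atTop (𝓝 (V ω))

namespace IsScaledLimit

variable {Ω : Type*} {mΩ : MeasurableSpace Ω} {μ : Measure Ω}
  {f g : ℕ → ℝ → ℝ} {Z : ℕ → Ω → ℕ} {s t : ℝ} {U V : Ω → ℝ≥0∞}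

lemma aemeasurable (hV : IsScaledLimit μ g Z s V) (hZ : ∀ n, Measurable (Z n)) :
    AEMeasurable V μ :=
  aemeasurable_of_tendsto_metrizable_ae' (fun n => by fun_prop) hV

lemma ae_le (hU : IsScaledLimit μ g Z t U) (hV : IsScaledLimit μ g Z s V)
    (hf : ∀ i, IsPGF (f i)) (hg : ∀ i, IsInvOn01 (g i) (f i)) (ht : 0 < t) (hts : t ≤ s) :
    U ≤ᵐ[μ] V := by
  filter_upwards [hU, hV] with ω hUω hVω
  refine le_of_tendsto_of_tendsto' hUω hVω fun n => ENNReal.ofReal_le_ofReal ?_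
  gcongr
  exact (strictMonoOn_hIter hf hg n).monotoneOn ht (ht.trans_le hts) hts

end IsScaledLimit

namespace IsBranchingProcess

variable {Ω : Type*} {mΩ : MeasurableSpace Ω} {μ : Measure Ω}
  {F : Filtration ℕ mΩ} {f g : ℕ → ℝ → ℝ} {Z : ℕ → Ω → ℕ} {s t : ℝ} {U V : Ω → ℝ≥0∞}

lemma measurable (hZ : IsBranchingProcess μ F f Z) (n : ℕ) : Measurable (Z n) :=
  (hZ.2.2.1 n).mono (F.le n) le_rfl

variable [IsProbabilityMeasure μ]

lemma integral_exp_neg_hIter_pow (hZ : IsBranchingProcess μ F f Z) (hf : ∀ i, IsPGF (f i))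
    (hg : ∀ i, IsInvOn01 (g i) (f i)) (hs : 0 < s) (n : ℕ) :
    ∫ ω, Real.exp (-hIter g n s) ^ Z n ω ∂μ = Real.exp (-s) := by
  induction n with
  | zero => simp [hZ.1, hIter]
  | succ n ih =>
    have hcond := hZ.2.2.2 n _ (exp_neg_mem_Icc (hIter_pos hf hg hs (n + 1)))
    rw [pgf_exp_neg_hIter_succ hf hg hs] at hcond
    rw [← integral_condExp (F.le n), integral_congr_ae hcond, ih]

lemma integral_expNeg (hZ : IsBranchingProcess μ F f Z) (hf : ∀ i, IsPGF (f i))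
    (hg : ∀ i, IsInvOn01 (g i) (f i)) (hV : IsScaledLimit μ g Z s V) (hs : 0 < s) :
    ∫ ω, expNeg (V ω) ∂μ = Real.exp (-s) := by
  have hpow (n : ℕ) (ω : Ω) : expNeg (ENNReal.ofReal (Z n ω * hIter g n s)) =
      Real.exp (-hIter g n s) ^ Z n ω := by
    rw [expNeg_ofReal (mul_nonneg (Nat.cast_nonneg _) (hIter_pos hf hg hs n).le),
      ← Real.exp_nat_mul, mul_neg]
  have hlim : Tendsto (fun n => ∫ ω, expNeg (ENNReal.ofReal (Z n ω * hIter g n s)) ∂μ) atTop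
      (𝓝 (∫ ω, expNeg (V ω) ∂μ)) := by
    have hZmeas := hZ.measurable
    refine tendsto_integral_filter_of_norm_le_const
      (.of_forall fun n => (integrable_expNeg (by fun_prop)).aestronglyMeasurable)
      ⟨1, .of_forall fun n => ae_of_all _ fun ω => ?_⟩
      (hV.mono fun ω hω => (continuous_expNeg.tendsto _).comp hω)
    rw [Real.norm_of_nonneg (expNeg_mem_Icc _).1]
    exact (expNeg_mem_Icc _).2
  simp only [hpow, hZ.integral_exp_neg_hIter_pow hf hg hs] at hlim
  exact tendsto_nhds_unique hlim tendsto_const_nhds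

lemma not_ae_eq (hZ : IsBranchingProcess μ F f Z) (hf : ∀ i, IsPGF (f i))
    (hg : ∀ i, IsInvOn01 (g i) (f i)) (hU : IsScaledLimit μ g Z t U)
    (hV : IsScaledLimit μ g Z s V) (ht : 0 < t) (hs : 0 < s) (hts : t ≠ s) : ¬ U =ᵐ[μ] V := by
  intro hUV
  have hexp : Real.exp (-t) = Real.exp (-s) := by
    rw [← hZ.integral_expNeg hf hg hU ht, ← hZ.integral_expNeg hf hg hV hs]
    exact integral_congr_ae (hUV.fun_comp expNeg)
  exact hts (neg_injective (Real.exp_injective hexp))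

lemma tendsto_hIter_div_of_ae_isEndpoint (hZ : IsBranchingProcess μ F f Z)
    (hf : ∀ i, IsPGF (f i)) (hg : ∀ i, IsInvOn01 (g i) (f i)) (hU : IsScaledLimit μ g Z t U)
    (hV : IsScaledLimit μ g Z s V) (ht : 0 < t) (hts : t < s)
    (hend : ∀ᵐ ω ∂μ, IsEndpoint (U ω) ∨ IsEndpoint (V ω)) :
    Tendsto (fun n => hIter g n t / hIter g n s) atTop (𝓝 0) := by
  have hs := ht.trans hts
  have hpos (n : ℕ) : 0 < hIter g n t / hIter g n s :=
    div_pos (hIter_pos hf hg ht n) (hIter_pos hf hg hs n)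
  refine tendsto_order.2 ⟨fun a ha => .of_forall fun n => ha.trans (hpos n), fun ε hε => ?_⟩
  by_contra hlt
  have hfreq : ∃ᶠ n in atTop, hIter g n s ≤ ε⁻¹ * hIter g n t := by
    refine (not_eventually.1 hlt).mono fun n hn => ?_
    rwa [not_lt, le_div_iff₀ (hIter_pos hf hg hs n), ← le_inv_mul_iff₀ hε] at hn
  refine hZ.not_ae_eq hf hg hU hV ht hs hts.ne ?_
  filter_upwards [hend, hU, hV, hU.ae_le hV hf hg ht hts.le] with ω hendω hUω hVω hle
  exact eq_of_le_of_le_mul_of_isEndpoint ENNReal.ofReal_ne_top hle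
    (le_ofReal_mul_of_frequently_le (fun n => Nat.cast_nonneg _) (inv_pos.2 hε).le hfreq hVω hUω)
    hendω

lemma tendsto_hIter_div_iff (hZ : IsBranchingProcess μ F f Z) (hf : ∀ i, IsPGF (f i))
    (hg : ∀ i, IsInvOn01 (g i) (f i)) (hU : IsScaledLimit μ g Z t U)
    (hV : IsScaledLimit μ g Z s V) (ht : 0 < t) (hts : t < s) :
    Tendsto (fun n => hIter g n t / hIter g n s) atTop (𝓝 0) ↔
      ∀ᵐ ω ∂μ, IsEndpoint (U ω) ∨ IsEndpoint (V ω) := by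
  refine ⟨fun h => ?_, hZ.tendsto_hIter_div_of_ae_isEndpoint hf hg hU hV ht hts⟩
  filter_upwards [hU, hV] with ω hUω hVω
  exact (eq_zero_or_eq_top_of_tendsto_div_zero (fun n => (hIter_pos hf hg ht n).le)
    (hIter_pos hf hg (ht.trans hts)) h hUω hVω).imp .inl .inr

lemma ae_isEndpoint_of_eventually (hZ : IsBranchingProcess μ F f Z) (hf : ∀ i, IsPGF (f i))
    (hg : ∀ i, IsInvOn01 (g i) (f i)) {W : ℝ → Ω → ℝ≥0∞}
    (hW : ∀ t, 0 < t → IsScaledLimit μ g Z t (W t)) (hs : 0 < s) {l : Filter ℝ} [l.NeBot]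
    (hl : l ≤ 𝓝 s) (hend : ∀ᶠ t in l, ∀ᵐ ω ∂μ, IsEndpoint (W s ω) ∨ IsEndpoint (W t ω)) :
    ∀ᵐ ω ∂μ, IsEndpoint (W s ω) := by
  have hpos : ∀ᶠ t in l, 0 < t := hl (lt_mem_nhds hs)
  refine ae_isEndpoint_of_tendsto_integral ((hW s hs).aemeasurable hZ.measurable)
    (hpos.mono fun t ht => (hW t ht).aemeasurable hZ.measurable) (hpos.mono fun t ht => ?_)
    hend ?_
  · exact (le_total s t).imp ((hW s hs).ae_le (hW t ht) hf hg hs)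
      ((hW t ht).ae_le (hW s hs) hf hg ht)
  · rw [hZ.integral_expNeg hf hg (hW s hs) hs]
    have hexp : Tendsto (fun t => Real.exp (-t)) l (𝓝 (Real.exp (-s))) :=
      ((Real.continuous_exp.comp continuous_neg).tendsto s).mono_left hl
    exact hexp.congr' (hpos.mono fun t ht => (hZ.integral_expNeg hf hg (hW t ht) ht).symm)

lemma ae_isEndpoint_iff_tendsto_left (hZ : IsBranchingProcess μ F f Z)
    (hf : ∀ i, IsPGF (f i)) (hg : ∀ i, IsInvOn01 (g i) (f i)) {W : ℝ → Ω → ℝ≥0∞}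
    (hW : ∀ t, 0 < t → IsScaledLimit μ g Z t (W t)) (hs : 0 < s) :
    (∀ᵐ ω ∂μ, IsEndpoint (W s ω)) ↔
      ∀ t, 0 < t → t < s → Tendsto (fun n => hIter g n t / hIter g n s) atTop (𝓝 0) := by
  refine ⟨fun h t ht hts => ?_, fun h => ?_⟩
  · exact (hZ.tendsto_hIter_div_iff hf hg (hW t ht) (hW s hs) ht hts).2 (h.mono fun _ => .inr)
  · refine hZ.ae_isEndpoint_of_eventually hf hg hW hs (l := 𝓝[<] s) nhdsWithin_le_nhds ?_
    filter_upwards [Ioo_mem_nhdsLT hs] with t ⟨ht, hts⟩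
    exact ((hZ.tendsto_hIter_div_iff hf hg (hW t ht) (hW s hs) ht hts).1 (h t ht hts)).mono
      fun _ => Or.symm

lemma ae_isEndpoint_iff_tendsto_right (hZ : IsBranchingProcess μ F f Z)
    (hf : ∀ i, IsPGF (f i)) (hg : ∀ i, IsInvOn01 (g i) (f i)) {W : ℝ → Ω → ℝ≥0∞}
    (hW : ∀ t, 0 < t → IsScaledLimit μ g Z t (W t)) (hs : 0 < s) :
    (∀ᵐ ω ∂μ, IsEndpoint (W s ω)) ↔
      ∀ t, s < t → Tendsto (fun n => hIter g n t / hIter g n s) atTop atTop := by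
  have hiff (t : ℝ) (hst : s < t) :
      Tendsto (fun n => hIter g n t / hIter g n s) atTop atTop ↔
        ∀ᵐ ω ∂μ, IsEndpoint (W s ω) ∨ IsEndpoint (W t ω) :=
    (tendsto_div_atTop_iff_tendsto_div_zero (hIter_pos hf hg (hs.trans hst))
      (hIter_pos hf hg hs)).trans
      (hZ.tendsto_hIter_div_iff hf hg (hW s hs) (hW t (hs.trans hst)) hs hst)
  refine ⟨fun h t hst => (hiff t hst).2 (h.mono fun _ => .inl), fun h => ?_⟩
  refine hZ.ae_isEndpoint_of_eventually hf hg hW hs (l := 𝓝[>] s) nhdsWithin_le_nhds ?_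
  filter_upwards [self_mem_nhdsWithin] with t hst using (hiff t hst).1 (h t hst)

end IsBranchingProcess

lemma prob_isEndpoint_eq_one_iff {Ω : Type*} [MeasurableSpace Ω] {μ : Measure Ω}
    [IsProbabilityMeasure μ] {V : Ω → ℝ≥0∞} (hV : AEMeasurable V μ) :
    μ {ω | IsEndpoint (V ω)} = 1 ↔ ∀ᵐ ω ∂μ, IsEndpoint (V ω) :=
  (mem_ae_iff_prob_eq_one₀ (hV.nullMeasurable
    ((measurableSet_singleton 0).union (measurableSet_singleton ∞)))).symm

/-- A point `s ∈ (0,∞)` is regular for the branching process `(Z n)`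
in the fixed environment `(f i)` (i.e. `P(W s ∈ {0,∞}) = 1`) if and only if
`h_n(t)/h_n(s) → 0` for all `0 < t < s`, or equivalently iff `h_n(t)/h_n(s) → ∞`
for all `s < t < ∞`. -/
theorem regular_iff_ratio_tendsto
    {Ω : Type*} {mΩ : MeasurableSpace Ω} (μ : Measure Ω) [IsProbabilityMeasure μ]
    (F : Filtration ℕ mΩ) (f g : ℕ → ℝ → ℝ)
    (hf : ∀ i, IsPGF (f i)) (hg : ∀ i, IsInvOn01 (g i) (f i))
    (Z : ℕ → Ω → ℕ) (hZ : IsBranchingProcess μ F f Z)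
    (W : ℝ → Ω → ℝ≥0∞)
    (hW : ∀ s, 0 < s → ∀ᵐ ω ∂μ,
      Tendsto (fun n => ENNReal.ofReal ((Z n ω : ℝ) * hIter g n s)) atTop (𝓝 (W s ω)))
    (s : ℝ) (hs : 0 < s) :
    (μ {ω | W s ω = 0 ∨ W s ω = ∞} = 1 ↔
      ∀ t, 0 < t → t < s → Tendsto (fun n => hIter g n t / hIter g n s) atTop (𝓝 0)) ∧
    ((∀ t, 0 < t → t < s → Tendsto (fun n => hIter g n t / hIter g n s) atTop (𝓝 0)) ↔
      ∀ t, s < t → Tendsto (fun n => hIter g n t / hIter g n s) atTop atTop) := by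
  have hprob : μ {ω | W s ω = 0 ∨ W s ω = ∞} = 1 ↔ ∀ᵐ ω ∂μ, IsEndpoint (W s ω) :=
    prob_isEndpoint_eq_one_iff (IsScaledLimit.aemeasurable (hW s hs) hZ.measurable)
  have hleft := hZ.ae_isEndpoint_iff_tendsto_left hf hg hW hs
  have hright := hZ.ae_isEndpoint_iff_tendsto_right hf hg hW hs
  exact ⟨hprob.trans hleft, hleft.symm.trans hright⟩

end
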